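/- For τ in the upper half plane, 𝓕₁(−τ) − 𝓕₁(τ) = (πi/2)·E₁(τ), where E₁(τ) = 1 − 4∑_{m,n≥1} e^{2πimnτ}. -/

import Mathlib

open MeasureTheory Set

noncomputable def digammaC (x : ℂ) : ℂ := deriv Complex.Gamma x / Complex.Gamma x

/-- `𝓢₁(x) = ∑ (ψ(nx) - log(nx) + 1/(2nx))`. -/
noncomputable def S1 (x : ℂ) : ℂ :=
  ∑' n : ℕ, (digammaC ((n + 1) * x) - Complex.log ((n + 1) * x) + 1 / (2 * (n + 1) * x))

/-- The Ramanujan period function `𝓕₁`. -/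
noncomputable def F1 (x : ℂ) : ℂ :=
  S1 x - (1 / 2) * ((Real.eulerMascheroniConstant : ℂ) - Complex.log (2 * Real.pi / x))

/-- The weight-one Eisenstein series `E₁`. -/
noncomputable def E1 (τ : ℂ) : ℂ :=
  1 - 4 * ∑' m : ℕ, ∑' n : ℕ,
    Complex.exp (2 * Real.pi * Complex.I * (m + 1) * (n + 1) * τ)

/-! By the reflection formula for `Γ`, the terms `R z = ψ z - log z + 1 / (2 * z)` of the series
`S1` satisfy `R (-z) - R z = -2πi ∑ qⁿ` on the upper half plane, where `q = exp (2πiz)` and `n ≥ 1`.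
Summing over the multiples of `τ` gives the double series of `E1`, while the constant term comes
from the jump of `log (2π / x)` between `x = τ` and `x = -τ`.

What has to be shown is that the series at `τ` and at `-τ` converge separately. Comparing
`R z` with `R (z + 1)` gives `R z = ∑ T (z + k)` over `k ≥ 0`, where `T w = O(|w|⁻³)` is the
trapezoidal error of `∫ t⁻¹` on `[w, w + 1]`. The resulting double series
`∑ T (n z + k)` runs over a cone of the lattice `ℤ z + ℤ` and converges absolutely, because the
exponent exceeds `2`.
-/

open Complex Filter Topology
open scoped Real

theorem ofReal_mul_mem_slitPlane {r : ℝ} (hr : 0 < r) {z : ℂ} (hz : z ∈ slitPlane) :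
    r * z ∈ slitPlane := by
  rw [mem_slitPlane_iff, re_ofReal_mul, im_ofReal_mul]
  exact hz.imp (mul_pos hr) (mul_ne_zero hr.ne')

theorem natCast_add_one_mul_mem_slitPlane {z : ℂ} (hz : z ∈ slitPlane) (n : ℕ) :
    (n + 1) * z ∈ slitPlane :=
  mod_cast ofReal_mul_mem_slitPlane (r := n + 1) n.cast_add_one_pos hz

theorem add_natCast_mem_slitPlane {z : ℂ} (hz : z ∈ slitPlane) (n : ℕ) :
    z + n ∈ slitPlane := by
  rw [mem_slitPlane_iff, add_re, natCast_re, add_im, natCast_im, add_zero]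
  exact hz.imp_left fun h ↦ by positivity

theorem add_one_mem_slitPlane {z : ℂ} (hz : z ∈ slitPlane) : z + 1 ∈ slitPlane :=
  mod_cast add_natCast_mem_slitPlane hz 1

theorem ne_neg_natCast_of_mem_slitPlane {z : ℂ} (hz : z ∈ slitPlane) (n : ℕ) : z ≠ -n :=
  fun h ↦ slitPlane_ne_zero (add_natCast_mem_slitPlane hz n) (by rw [h, neg_add_cancel])

theorem inv_mem_slitPlane {z : ℂ} (hz : z ∈ slitPlane) : z⁻¹ ∈ slitPlane := by
  have hpos := normSq_pos.2 (slitPlane_ne_zero hz)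
  rw [mem_slitPlane_iff, inv_re, inv_im]
  exact hz.imp (div_pos · hpos) fun h ↦ div_ne_zero (neg_ne_zero.2 h) hpos.ne'

theorem one_add_inv_mem_slitPlane {z : ℂ} (hz : z ∈ slitPlane) : 1 + z⁻¹ ∈ slitPlane :=
  add_comm z⁻¹ 1 ▸ add_one_mem_slitPlane (inv_mem_slitPlane hz)

/- The imaginary parts of `z` and `1 + z⁻¹` have opposite signs, so the sum of the arguments does
not leave `(-π, π]`. -/
theorem log_add_one_of_mem_slitPlane {z : ℂ} (hz : z ∈ slitPlane) :
    log (z + 1) = log z + log (1 + z⁻¹) := by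
  have h0 := slitPlane_ne_zero hz
  have him : (1 + z⁻¹).im = -z.im / normSq z := by simp
  have hpos := normSq_pos.2 h0
  have harg : z.arg + (1 + z⁻¹).arg ∈ Ioc (-π) π := by
    rcases lt_trichotomy z.im 0 with h | h | h
    · have hz' : z.arg < 0 := arg_neg_iff.2 h
      have hw' : 0 ≤ (1 + z⁻¹).arg :=
        arg_nonneg_iff.2 (him ▸ div_nonneg (neg_nonneg.2 h.le) hpos.le)
      constructor <;> linarith [neg_pi_lt_arg z, arg_le_pi (1 + z⁻¹)]
    · have hz' : z.arg = 0 := arg_eq_zero_iff.2 ⟨(hz.resolve_right (not_not.2 h)).le, h⟩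
      rw [hz', zero_add]
      exact arg_mem_Ioc _
    · have hz' : 0 ≤ z.arg := arg_nonneg_iff.2 h.le
      have hw' : (1 + z⁻¹).arg < 0 :=
        arg_neg_iff.2 (him ▸ div_neg_of_neg_of_pos (neg_neg_iff_pos.2 h) hpos)
      constructor <;> linarith [neg_pi_lt_arg (1 + z⁻¹), arg_le_pi z]
  rw [← (log_mul_eq_add_log_iff h0 (slitPlane_ne_zero (one_add_inv_mem_slitPlane hz))).2 harg,
    mul_add, mul_one, mul_inv_cancel₀ h0]

theorem log_neg_of_im_pos {z : ℂ} (hz : 0 < z.im) : log (-z) = log z - π * I := by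
  rw [log, log, arg_neg_eq_arg_sub_pi_of_im_pos hz, norm_neg]
  push_cast
  ring

theorem exists_pos_forall_mul_add_le_norm {z : ℂ} (hz : z ∈ slitPlane) :
    ∃ c : ℝ, 0 < c ∧ ∀ s t : ℝ, 0 ≤ s → 0 ≤ t → c * (s + t) ≤ ‖s * z + t‖ := by
  have hseg : segment ℝ 1 z ⊆ slitPlane := starConvex_one_slitPlane.segment_subset hz
  have hcompact : IsCompact (segment ℝ 1 z) := by
    rw [segment_eq_image_lineMap]
    exact isCompact_Icc.image AffineMap.lineMap_continuous
  obtain ⟨w, hw, hmin⟩ :=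
    hcompact.exists_isMinOn ⟨1, left_mem_segment ℝ 1 z⟩ continuous_norm.continuousOn
  refine ⟨‖w‖, norm_pos_iff.2 (slitPlane_ne_zero (hseg hw)), fun s t hs ht ↦ ?_⟩
  rcases (add_nonneg ht hs).eq_or_lt with hst | hst
  · simp [add_comm s, ← hst]
  have hmem : (t / (t + s)) • (1 : ℂ) + (s / (t + s)) • z ∈ segment ℝ 1 z :=
    mem_segment_iff_div.2 ⟨t, s, ht, hs, hst, rfl⟩
  have hne : (t : ℂ) + s ≠ 0 := mod_cast hst.ne'
  calc ‖w‖ * (s + t)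
      ≤ ‖(t / (t + s)) • (1 : ℂ) + (s / (t + s)) • z‖ * (s + t) := by
        gcongr
        exact hmin hmem
    _ = ‖((t / (t + s)) • (1 : ℂ) + (s / (t + s)) • z) * (t + s : ℝ)‖ := by
        rw [norm_mul, norm_real, Real.norm_of_nonneg hst.le, add_comm s]
    _ = ‖s * z + t‖ := by
        congr 1
        simp only [real_smul]
        push_cast
        field_simp
        ring

theorem summable_inv_norm_mul_add_pow {z : ℂ} (hz : z ∈ slitPlane) {k : ℕ} (hk : 2 < k) :
    Summable fun p : ℕ × ℕ ↦ (‖(p.1 + 1) * z + p.2‖ ^ k)⁻¹ := by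
  obtain ⟨c, hc, hle⟩ := exists_pos_forall_mul_add_le_norm hz
  let v (p : ℕ × ℕ) : Fin 2 → ℤ := ![p.1 + 1, p.2]
  have hv : Function.Injective v := fun p q h ↦ by
    have h0 := congrFun h 0
    have h1 := congrFun h 1
    simp only [v, Matrix.cons_val_zero, Matrix.cons_val_one, add_left_inj, Nat.cast_inj] at h0 h1
    exact Prod.ext h0 h1
  have hsum : Summable fun p ↦ (c ^ k)⁻¹ * ‖v p‖ ^ (-k : ℝ) :=
    ((EisensteinSeries.summable_one_div_norm_rpow (mod_cast hk)).comp_injective hv).mul_left _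
  refine hsum.of_nonneg_of_le (fun p ↦ by positivity) fun p ↦ ?_
  have hnorm : ‖v p‖ ≤ (p.1 + 1 : ℝ) + p.2 := by
    refine (pi_norm_le_iff_of_nonneg (by positivity)).2 (Fin.forall_fin_two.2 ⟨?_, ?_⟩)
    · simp [v, Int.norm_eq_abs, abs_of_nonneg (by positivity : (0 : ℝ) ≤ p.1 + 1)]
    · simpa [v] using (by positivity : (0 : ℝ) ≤ p.1 + 1)
  have hpos : 0 < ‖v p‖ := norm_pos_iff.2 fun h ↦ by
    have := congrFun h 0
    simp only [v, Matrix.cons_val_zero, Pi.zero_apply] at this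
    lia
  have hbound : c * ‖v p‖ ≤ ‖(p.1 + 1) * z + p.2‖ := by
    calc _ ≤ c * ((p.1 + 1 : ℝ) + p.2) := by gcongr
      _ ≤ _ := mod_cast hle (p.1 + 1) p.2 (by positivity) (by positivity)
  rw [Real.rpow_neg hpos.le, Real.rpow_natCast, ← mul_inv, ← mul_pow]
  gcongr

/-- The error of the trapezoidal rule for `log (w + 1) - log w = ∫ t in w..w + 1, t⁻¹`, where the
difference of logarithms is encoded as `log (1 + w⁻¹)`. -/
noncomputable def logTrapezoidError (w : ℂ) : ℂ :=
  log (1 + w⁻¹) - (w⁻¹ + (w + 1)⁻¹) / 2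

theorem differentiableOn_logTrapezoidError : DifferentiableOn ℂ logTrapezoidError slitPlane := by
  intro w hw
  have h0 := slitPlane_ne_zero hw
  have h1 := slitPlane_ne_zero (add_one_mem_slitPlane hw)
  have hlog := one_add_inv_mem_slitPlane hw
  unfold logTrapezoidError
  fun_prop (disch := assumption)

/- The quadratic Taylor polynomials at `u = 0` of `log (1 + u)` and `(u + u / (1 + u)) / 2` agree;
here `u = w⁻¹`. -/
theorem norm_logTrapezoidError_le {w : ℂ} (hw : 2 ≤ ‖w‖) :
    ‖logTrapezoidError w‖ ≤ 2 * (‖w‖ ^ 3)⁻¹ := by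
  have h0 : w ≠ 0 := norm_pos_iff.1 (by linarith)
  obtain ⟨u, rfl⟩ : ∃ u, w = u⁻¹ := ⟨w⁻¹, (inv_inv w).symm⟩
  have hu0 : u ≠ 0 := fun h ↦ h0 (by rw [h, inv_zero])
  have hu : ‖u‖ ≤ 1 / 2 := by
    rw [norm_inv] at hw
    simpa using inv_anti₀ two_pos hw
  have hone : 1 / 2 ≤ ‖1 + u‖ := by
    have := norm_sub_norm_le (1 : ℂ) (-u)
    rw [norm_one, norm_neg, sub_neg_eq_add] at this
    linarith
  have hone0 : 1 + u ≠ 0 := norm_pos_iff.1 (by linarith)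
  have htaylor : logTrapezoidError u⁻¹ =
      (log (1 + u) - logTaylor 3 u) - u ^ 3 / (2 * (1 + u)) := by
    have hinv : (u⁻¹ + 1)⁻¹ = u / (1 + u) := by
      field_simp
    rw [logTrapezoidError, inv_inv, hinv]
    simp only [logTaylor, Finset.sum_range_succ, Finset.sum_range_zero]
    push_cast
    field_simp
    ring
  have hlog : ‖log (1 + u) - logTaylor 3 u‖ ≤ ‖u‖ ^ 3 := by
    have hinv : (1 - ‖u‖)⁻¹ ≤ 2 := inv_le_of_inv_le₀ two_pos (by linarith)
    calc _ ≤ ‖u‖ ^ 3 * (1 - ‖u‖)⁻¹ / (2 + 1) := norm_log_sub_logTaylor_le 2 (by linarith)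
      _ ≤ ‖u‖ ^ 3 * 2 / (2 + 1) := by gcongr
      _ ≤ ‖u‖ ^ 3 := by linarith [pow_nonneg (norm_nonneg u) 3]
  have hrat : ‖u ^ 3 / (2 * (1 + u))‖ ≤ ‖u‖ ^ 3 := by
    rw [norm_div, norm_pow, norm_mul, norm_ofNat]
    exact div_le_self (by positivity) (by linarith)
  calc ‖logTrapezoidError u⁻¹‖ ≤ ‖u‖ ^ 3 + ‖u‖ ^ 3 := htaylor ▸ norm_sub_le_of_le hlog hrat
    _ = 2 * (‖u⁻¹‖ ^ 3)⁻¹ := by rw [norm_inv, inv_pow, inv_inv, two_mul]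

theorem summable_logTrapezoidError {ι : Type*} {f : ι → ℂ} (hf0 : ∀ i, f i ≠ 0)
    (hf : Summable fun i ↦ (‖f i‖ ^ 3)⁻¹) : Summable fun i ↦ logTrapezoidError (f i) := by
  refine (hf.mul_left 2).of_norm_bounded_eventually ?_
  have hlt := hf.tendsto_cofinite_zero.eventually_lt_const (show (0 : ℝ) < (2 ^ 3)⁻¹ by norm_num)
  filter_upwards [hlt] with i hi
  have hpos : 0 < ‖f i‖ := norm_pos_iff.2 (hf0 i)
  have hpow : 2 ^ 3 < ‖f i‖ ^ 3 := (inv_lt_inv₀ (by positivity) (by norm_num)).1 hi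
  exact norm_logTrapezoidError_le (le_of_pow_le_pow_left₀ three_ne_zero hpos.le hpow.le)

theorem summable_logTrapezoidError_mul_add {z : ℂ} (hz : z ∈ slitPlane) :
    Summable fun p : ℕ × ℕ ↦ logTrapezoidError ((p.1 + 1) * z + p.2) :=
  summable_logTrapezoidError
    (fun p ↦ slitPlane_ne_zero <|
      add_natCast_mem_slitPlane (natCast_add_one_mul_mem_slitPlane hz p.1) p.2)
    (summable_inv_norm_mul_add_pow hz (by norm_num))

theorem summable_logTrapezoidError_add_natCast {z : ℂ} (hz : z ∈ slitPlane) :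
    Summable fun k : ℕ ↦ logTrapezoidError (z + k) := by
  simpa using (summable_logTrapezoidError_mul_add hz).prod_factor 0

theorem differentiableOn_tsum_logTrapezoidError :
    DifferentiableOn ℂ (fun z ↦ ∑' k : ℕ, logTrapezoidError (z + k)) {z | 2 < z.re} := by
  have hu : Summable fun k : ℕ ↦ 2 * (((k + 2 : ℕ) : ℝ) ^ 3)⁻¹ :=
    ((summable_nat_add_iff 2).2 (Real.summable_nat_pow_inv.2 (by norm_num))).mul_left 2
  refine differentiableOn_tsum_of_summable_norm hu (fun k z hz ↦ ?_)
    (isOpen_lt continuous_const continuous_re) fun k z (hz : 2 < z.re) ↦ ?_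
  · have hmem : z + k ∈ slitPlane :=
      add_natCast_mem_slitPlane (Or.inl (two_pos.trans hz)) k
    have hdiff : DifferentiableAt ℂ logTrapezoidError (z + k) :=
      differentiableOn_logTrapezoidError.differentiableAt (isOpen_slitPlane.mem_nhds hmem)
    exact (hdiff.comp (f := fun w : ℂ ↦ w + k) z (by fun_prop)).differentiableWithinAt
  · have hnorm : ((k + 2 : ℕ) : ℝ) ≤ ‖z + k‖ := by
      refine le_trans ?_ (re_le_norm _)
      rw [add_re, natCast_re, Nat.cast_add, Nat.cast_ofNat]
      linarith
    have hnorm2 : 2 ≤ ‖z + k‖ := le_trans (by simp) hnorm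
    refine (norm_logTrapezoidError_le hnorm2).trans ?_
    gcongr

theorem differentiableAt_realGamma_of_pos {x : ℝ} (hx : 0 < x) :
    DifferentiableAt ℝ Real.Gamma x :=
  Real.differentiableAt_Gamma fun m ↦ by linarith [m.cast_nonneg (α := ℝ)]

theorem logDeriv_Gamma_le_log {x : ℝ} (hx : 0 < x) : logDeriv Real.Gamma x ≤ Real.log x := by
  have hΓ := Real.Gamma_pos_of_pos hx
  have hderiv : HasDerivAt (Real.log ∘ Real.Gamma) (logDeriv Real.Gamma x) x :=
    (differentiableAt_realGamma_of_pos hx).hasDerivAt.log hΓ.ne'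
  have hslope := Real.convexOn_log_Gamma.le_slope_of_hasDerivAt hx
    (show 0 < x + 1 by positivity) (lt_add_one x) hderiv
  rwa [slope_def_field, add_sub_cancel_left, div_one, Function.comp_apply, Function.comp_apply,
    Real.Gamma_add_one hx.ne', Real.log_mul hx.ne' hΓ.ne', add_sub_cancel_right] at hslope

theorem log_le_logDeriv_Gamma_add_one {x : ℝ} (hx : 0 < x) :
    Real.log x ≤ logDeriv Real.Gamma (x + 1) := by
  have hx1 : 0 < x + 1 := by positivity
  have hderiv : HasDerivAt (Real.log ∘ Real.Gamma) (logDeriv Real.Gamma (x + 1)) (x + 1) :=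
    (differentiableAt_realGamma_of_pos hx1).hasDerivAt.log (Real.Gamma_pos_of_pos hx1).ne'
  have hslope := Real.convexOn_log_Gamma.slope_le_of_hasDerivAt hx hx1 (lt_add_one x) hderiv
  rwa [slope_def_field, add_sub_cancel_left, div_one, Function.comp_apply, Function.comp_apply,
    Real.Gamma_add_one hx.ne', Real.log_mul hx.ne' (Real.Gamma_pos_of_pos hx).ne',
    add_sub_cancel_right] at hslope

theorem tendsto_logDeriv_Gamma_sub_log :
    Tendsto (fun x ↦ logDeriv Real.Gamma x - Real.log x) atTop (𝓝 0) := by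
  refine tendsto_of_tendsto_of_tendsto_of_le_of_le' (Real.tendsto_log_comp_add_sub_log (-1))
    tendsto_const_nhds ?_ ?_
  · filter_upwards [eventually_gt_atTop 1] with x hx
    have := log_le_logDeriv_Gamma_add_one (sub_pos.2 hx)
    rw [sub_add_cancel] at this
    exact sub_le_sub_right this _
  · filter_upwards [eventually_gt_atTop 0] with x hx
    exact sub_nonpos.2 (logDeriv_Gamma_le_log hx)

theorem digamma_ofReal {x : ℝ} (hx : ∀ m : ℕ, x ≠ -m) :
    digamma x = (logDeriv Real.Gamma x : ℝ) := by
  have hcomplex : HasDerivAt Complex.Gamma (deriv Complex.Gamma x) (x : ℂ) :=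
    (Complex.differentiableAt_Gamma x fun m ↦ mod_cast hx m).hasDerivAt
  have hreal : HasDerivAt (fun y : ℝ ↦ Complex.Gamma y) (deriv Real.Gamma x : ℝ) x := by
    simpa only [Gamma_ofReal] using (Real.differentiableAt_Gamma hx).hasDerivAt.ofReal_comp
  rw [digamma_def, logDeriv_apply, hcomplex.comp_ofReal.unique hreal, Gamma_ofReal, logDeriv_apply,
    ofReal_div]

theorem differentiableOn_digamma : DifferentiableOn ℂ digamma slitPlane := by
  have hΓ : DifferentiableOn ℂ Complex.Gamma slitPlane := fun z hz ↦
    (differentiableAt_Gamma z (ne_neg_natCast_of_mem_slitPlane hz)).differentiableWithinAt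
  exact (hΓ.deriv isOpen_slitPlane).div hΓ fun z hz ↦
    Gamma_ne_zero (ne_neg_natCast_of_mem_slitPlane hz)

/-- The remainder of the asymptotic expansion `ψ z ∼ log z - 1 / (2 * z)`; the series `S1 x` sums it
over the points `x, 2x, 3x, …`. -/
noncomputable def digammaRemainder (z : ℂ) : ℂ :=
  digamma z - log z + 1 / (2 * z)

theorem S1_eq_tsum_digammaRemainder (x : ℂ) :
    S1 x = ∑' n : ℕ, digammaRemainder ((n + 1) * x) := by
  simp only [S1, digammaRemainder, mul_assoc]
  rfl

theorem differentiableOn_digammaRemainder : DifferentiableOn ℂ digammaRemainder slitPlane :=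
  (differentiableOn_digamma.sub fun _ hz ↦ (differentiableAt_log hz).differentiableWithinAt).add <|
    (differentiableOn_const 1).div (by fun_prop) fun _ hz ↦
      mul_ne_zero two_ne_zero (slitPlane_ne_zero hz)

theorem tendsto_digammaRemainder_ofReal :
    Tendsto (fun x : ℝ ↦ digammaRemainder x) atTop (𝓝 0) := by
  have hlim :
      Tendsto (fun x : ℝ ↦ logDeriv Real.Gamma x - Real.log x + 1 / (2 * x)) atTop (𝓝 0) := by
    simpa using tendsto_logDeriv_Gamma_sub_log.add
      ((tendsto_id.const_mul_atTop (two_pos (α := ℝ))).const_div_atTop 1)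
  refine ((continuous_ofReal.tendsto' 0 0 ofReal_zero).comp hlim).congr' ?_
  filter_upwards [eventually_gt_atTop 0] with x hx
  have hdigamma := digamma_ofReal (x := x) fun m ↦ by linarith [m.cast_nonneg (α := ℝ)]
  simp [digammaRemainder, hdigamma, ofReal_log hx.le]

theorem digammaRemainder_eq_logTrapezoidError_add {z : ℂ} (hz : z ∈ slitPlane) :
    digammaRemainder z = logTrapezoidError z + digammaRemainder (z + 1) := by
  have h0 := slitPlane_ne_zero hz
  have h1 := slitPlane_ne_zero (add_one_mem_slitPlane hz)
  rw [digammaRemainder, digammaRemainder, logTrapezoidError,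
    digamma_apply_add_one z (ne_neg_natCast_of_mem_slitPlane hz), log_add_one_of_mem_slitPlane hz]
  field_simp
  ring

theorem digammaRemainder_eq_sum_add {z : ℂ} (hz : z ∈ slitPlane) (N : ℕ) :
    digammaRemainder z =
      ∑ k ∈ Finset.range N, logTrapezoidError (z + k) + digammaRemainder (z + N) := by
  induction N with
  | zero => simp
  | succ N ih =>
    rw [ih, Finset.sum_range_succ,
      digammaRemainder_eq_logTrapezoidError_add (add_natCast_mem_slitPlane hz N), add_assoc z,
      ← Nat.cast_add_one, add_assoc]

theorem digammaRemainder_ofReal_eq_tsum {x : ℝ} (hx : 0 < x) :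
    digammaRemainder x = ∑' k : ℕ, logTrapezoidError (x + k) := by
  have hmem : (x : ℂ) ∈ slitPlane := ofReal_mem_slitPlane.2 hx
  have hrem : Tendsto (fun N : ℕ ↦ digammaRemainder (x + N)) atTop (𝓝 0) := by
    simpa [Function.comp_def] using tendsto_digammaRemainder_ofReal.comp
      (tendsto_atTop_add_const_left atTop x tendsto_natCast_atTop_atTop)
  have hlim := (summable_logTrapezoidError_add_natCast hmem).hasSum.tendsto_sum_nat.add hrem
  simp only [← digammaRemainder_eq_sum_add hmem, add_zero] at hlim
  exact tendsto_nhds_unique tendsto_const_nhds hlim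

theorem digammaRemainder_eqOn_tsum :
    EqOn digammaRemainder (fun z ↦ ∑' k : ℕ, logTrapezoidError (z + k)) {z | 2 < z.re} := by
  have hopen : IsOpen {z : ℂ | 2 < z.re} := isOpen_lt continuous_const continuous_re
  have hsub : {z : ℂ | 2 < z.re} ⊆ slitPlane := fun z hz ↦ Or.inl (two_pos.trans hz)
  have hreal : Tendsto ((↑) : ℝ → ℂ) (𝓝[≠] 3) (𝓝[≠] (3 : ℝ)) :=
    (hasDerivAt_id (3 : ℝ)).ofReal_comp.tendsto_nhdsNE (by simp)
  have hremainder : AnalyticOnNhd ℂ digammaRemainder {z | 2 < z.re} :=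
    (differentiableOn_digammaRemainder.mono hsub).analyticOnNhd hopen
  refine hremainder.eqOn_of_preconnected_of_frequently_eq
    (differentiableOn_tsum_logTrapezoidError.analyticOnNhd hopen)
    (convex_halfSpace_re_gt 2).isPreconnected (z₀ := ((3 : ℝ) : ℂ)) ?_ ?_
  · rw [mem_ofPred_eq, ofReal_re]
    norm_num
  refine hreal.frequently (Eventually.frequently ?_)
  filter_upwards [nhdsWithin_le_nhds (lt_mem_nhds three_pos)] with x hx
  exact digammaRemainder_ofReal_eq_tsum hx

theorem digammaRemainder_eq_tsum {z : ℂ} (hz : z ∈ slitPlane) :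
    digammaRemainder z = ∑' k : ℕ, logTrapezoidError (z + k) := by
  obtain ⟨N, hN⟩ := exists_nat_gt (2 - z.re)
  have hre : 2 < (z + N).re := by
    rw [add_re, natCast_re]
    linarith
  rw [digammaRemainder_eq_sum_add hz N, digammaRemainder_eqOn_tsum hre,
    ← (summable_logTrapezoidError_add_natCast hz).sum_add_tsum_nat_add N]
  simp only [Nat.cast_add, add_assoc, add_comm (N : ℂ)]

theorem summable_digammaRemainder {z : ℂ} (hz : z ∈ slitPlane) :
    Summable fun n : ℕ ↦ digammaRemainder ((n + 1) * z) := by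
  simp only [fun n ↦ digammaRemainder_eq_tsum (natCast_add_one_mul_mem_slitPlane hz n)]
  exact (summable_logTrapezoidError_mul_add hz).prod

theorem digamma_one_sub_sub_digamma {z : ℂ} (hz : z ∈ integerComplement) :
    digamma (1 - z) - digamma z = π * cot (π * z) := by
  have hz' : ∀ m : ℕ, z ≠ -m := fun m h ↦ hz ⟨-m, by simp [h]⟩
  have h1z : ∀ m : ℕ, 1 - z ≠ -m := fun m h ↦ hz ⟨m + 1, by push_cast; linear_combination h⟩
  have hsub : DifferentiableAt ℂ (fun w : ℂ ↦ 1 - w) z := by fun_prop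
  have hleft : logDeriv (fun w ↦ Gamma w * Gamma (1 - w)) z = digamma z - digamma (1 - z) := by
    have hcomp : logDeriv (fun w ↦ Gamma (1 - w)) z = -digamma (1 - z) := by
      refine (logDeriv_comp (differentiableAt_Gamma _ h1z) hsub).trans ?_
      rw [deriv_const_sub, deriv_id'', mul_neg_one, digamma_def]
    rw [logDeriv_mul (f := Gamma) (g := fun w ↦ Gamma (1 - w)) z (Gamma_ne_zero hz')
      (Gamma_ne_zero h1z) (differentiableAt_Gamma z hz')
      ((differentiableAt_Gamma _ h1z).comp z hsub), hcomp, digamma_def, ← sub_eq_add_neg]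
  have hright : logDeriv (fun w ↦ π / sin (π * w)) z = -(π * cot (π * z)) := by
    have hsin : logDeriv (fun w : ℂ ↦ sin (π * w)) z = π * cot (π * z) := by
      have hmul : DifferentiableAt ℂ (fun w : ℂ ↦ π * w) z := by fun_prop
      refine (logDeriv_comp differentiableAt_sin hmul).trans ?_
      rw [logDeriv_sin, deriv_const_mul_id, mul_comm]
    rw [logDeriv_div z (mod_cast Real.pi_ne_zero) (sin_pi_mul_ne_zero hz) (by fun_prop)
      (by fun_prop), hsin, logDeriv_const, Pi.zero_apply, zero_sub]
  simp only [Gamma_mul_Gamma_one_sub] at hleft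
  linear_combination hleft - hright

theorem digamma_neg_sub_digamma {z : ℂ} (hz : z ∈ integerComplement) :
    digamma (-z) - digamma z = π * cot (π * z) + 1 / z := by
  have hrec := digamma_apply_add_one (-z) fun m h ↦ hz ⟨m, by simpa using h.symm⟩
  rw [neg_add_eq_sub, inv_neg] at hrec
  linear_combination digamma_one_sub_sub_digamma hz - hrec

theorem digammaRemainder_neg_sub {z : ℂ} (hz : 0 < z.im) :
    digammaRemainder (-z) - digammaRemainder z =
      -2 * π * I * ∑' n : ℕ, exp (2 * π * I * z) ^ (n + 1) := by
  let w : UpperHalfPlane := ⟨z, hz⟩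
  have h0 : z ≠ 0 := w.ne_zero
  have hcot : π * cot (π * z) =
      π * I - 2 * π * I * (1 + ∑' n : ℕ, exp (2 * π * I * z) ^ (n + 1)) := by
    rw [← pow_zero (exp (2 * π * I * z)), ← (summable_geometric_of_norm_lt_one
      w.norm_exp_two_pi_I_lt_one).tsum_eq_zero_add]
    exact pi_mul_cot_pi_q_exp w
  have hdigamma := digamma_neg_sub_digamma w.coe_mem_integerComplement
  rw [digammaRemainder, digammaRemainder, log_neg_of_im_pos hz]
  have hfrac : 1 / (2 * -z) - 1 / (2 * z) + 1 / z = 0 := by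
    field_simp
    ring
  linear_combination hdigamma + hcot + hfrac

theorem S1_neg_sub {τ : ℂ} (hτ : 0 < τ.im) :
    S1 (-τ) - S1 τ = -2 * π * I *
      ∑' m : ℕ, ∑' n : ℕ, exp (2 * π * I * (m + 1) * (n + 1) * τ) := by
  have hpos : τ ∈ slitPlane := Or.inr hτ.ne'
  have hneg : -τ ∈ slitPlane := Or.inr (by simpa using hτ.ne')
  rw [S1_eq_tsum_digammaRemainder, S1_eq_tsum_digammaRemainder,
    ← (summable_digammaRemainder hneg).tsum_sub (summable_digammaRemainder hpos), ← tsum_mul_left]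
  refine tsum_congr fun m ↦ ?_
  have him : 0 < ((m + 1) * τ).im := by
    simp only [mul_im, add_re, natCast_re, one_re, add_im, natCast_im, one_im, add_zero, zero_mul]
    positivity
  rw [mul_neg, digammaRemainder_neg_sub him]
  congr! 3 with n
  rw [← exp_nat_mul]
  push_cast
  ring_nf

theorem log_ofReal_div_neg {r : ℝ} (hr : 0 < r) {τ : ℂ} (hτ : 0 < τ.im) :
    log (r / -τ) = log (r / τ) + π * I := by
  have him : 0 < (r / -τ).im := by
    have : 0 < normSq τ := normSq_pos.2 fun h ↦ by simp [h] at hτ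
    rw [div_eq_mul_inv, im_ofReal_mul, inv_im, neg_im, neg_neg, normSq_neg]
    positivity
  have hlog := log_neg_of_im_pos him
  rw [← div_neg, neg_neg] at hlog
  rw [hlog, sub_add_cancel]

theorem F1_Eisenstein (τ : ℂ) (hτ : 0 < τ.im) :
    F1 (-τ) - F1 τ = (Real.pi * Complex.I / 2) * E1 τ := by
  have hlog : log (2 * π / -τ) = log (2 * π / τ) + π * I :=
    mod_cast log_ofReal_div_neg Real.two_pi_pos hτ
  rw [F1, F1, E1, hlog]
  linear_combination S1_neg_sub hτ
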